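/- arXiv:2012.12692 — 3 statements merged into one kernel-verified Lean document; each statement's English description precedes it below -/
import Mathlib

section
/- For every natural number n, the improper integral ∫_{0}^{∞} (x−1)^n e^{−x} dx (over the reals) equals !n, the number of derangements of an n-element set. -/
/-!
Integration by parts gives `∫ p e⁻ˣ = p(0) + ∫ p' e⁻ˣ` over `(0, ∞)` for every polynomial `p`.
For `p = (X - 1) ^ (n + 1)` this is the recurrence `!(n + 1) = (n + 1) * !n + (-1) ^ (n + 1)`.
-/

open Asymptotics Filter MeasureTheory Polynomial Set Topology

section PolynomialMulExp

variable (p : ℝ[X]) {b : ℝ}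

lemma isLittleO_polynomial_exp_pos_mul_atTop (hb : 0 < b) :
    (fun x ↦ p.eval x) =o[atTop] fun x ↦ Real.exp (b * x) := by
  have hpow : (fun x ↦ p.eval x) =O[atTop] fun x ↦ x ^ p.natDegree := by
    simpa only [eval_pow, eval_X] using
      p.isBigO_atTop_of_degree_le (X ^ p.natDegree) (by simp [degree_le_natDegree])
  exact hpow.trans_isLittleO (isLittleO_pow_exp_pos_mul_atTop p.natDegree hb)

lemma tendsto_polynomial_mul_exp_neg_mul_atTop (hb : 0 < b) :
    Tendsto (fun x ↦ p.eval x * Real.exp (-b * x)) atTop (𝓝 0) := by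
  simpa only [neg_mul, Real.exp_neg, div_eq_mul_inv] using
    (isLittleO_polynomial_exp_pos_mul_atTop p hb).tendsto_div_nhds_zero

lemma integrableOn_polynomial_mul_exp_neg_mul_Ioi (hb : 0 < b) (a : ℝ) :
    IntegrableOn (fun x ↦ p.eval x * Real.exp (-b * x)) (Ioi a) := by
  -- Half of the exponential decay absorbs the growth of `p`.
  have hdecay : (fun x ↦ p.eval x * Real.exp (-b * x)) =O[atTop]
      fun x ↦ Real.exp (b / 2 * x) * Real.exp (-b * x) :=
    (isLittleO_polynomial_exp_pos_mul_atTop p (half_pos hb)).isBigO.mul (isBigO_refl _ _)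
  refine integrable_of_isBigO_exp_neg (half_pos hb) (by fun_prop) (hdecay.congr_right fun x ↦ ?_)
  rw [← Real.exp_add]
  ring_nf

lemma mul_integral_polynomial_mul_exp_neg_mul_Ioi (hb : 0 < b) (a : ℝ) :
    b * ∫ x in Ioi a, p.eval x * Real.exp (-b * x) =
      p.eval a * Real.exp (-b * a) +
        ∫ x in Ioi a, p.derivative.eval x * Real.exp (-b * x) := by
  have hderiv (x : ℝ) : HasDerivAt (fun y ↦ p.eval y * Real.exp (-b * y))
      (p.derivative.eval x * Real.exp (-b * x) - b * (p.eval x * Real.exp (-b * x))) x := by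
    refine ((p.hasDerivAt x).mul ((hasDerivAt_id x).const_mul (-b)).exp).congr_deriv ?_
    simp only [id]
    ring
  have hint' := integrableOn_polynomial_mul_exp_neg_mul_Ioi p.derivative hb a
  have hint := (integrableOn_polynomial_mul_exp_neg_mul_Ioi p hb a).const_mul b
  have hftc := integral_Ioi_of_hasDerivAt_of_tendsto' (fun x _ ↦ hderiv x) (hint'.sub hint)
    (tendsto_polynomial_mul_exp_neg_mul_atTop p hb)
  rw [integral_sub hint' hint, integral_const_mul] at hftc
  linarith

end PolynomialMulExp

lemma integral_sub_pow_succ_mul_exp_neg_Ioi (a c : ℝ) (n : ℕ) :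
    ∫ x in Ioi a, (x - c) ^ (n + 1) * Real.exp (-x) =
      (n + 1) * (∫ x in Ioi a, (x - c) ^ n * Real.exp (-x)) +
        (a - c) ^ (n + 1) * Real.exp (-a) := by
  have hparts := mul_integral_polynomial_mul_exp_neg_mul_Ioi ((X - C c) ^ (n + 1)) one_pos a
  simp only [derivative_X_sub_C_pow, Nat.add_sub_cancel, Nat.cast_add, Nat.cast_one, eval_mul,
    eval_pow, eval_sub, eval_X, eval_C, neg_mul, one_mul, mul_assoc, integral_const_mul] at hparts
  rw [hparts, add_comm]

theorem derangements_integral (n : ℕ) :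
    ∫ x in Set.Ioi (0 : ℝ), (x - 1) ^ n * Real.exp (-x) = (numDerangements n : ℝ) := by
  induction n with
  | zero =>
    simp only [pow_zero, one_mul, integral_exp_neg_Ioi_zero, numDerangements_zero, Nat.cast_one]
  | succ n ih =>
    have hsucc : (numDerangements (n + 1) : ℝ) = (n + 1) * numDerangements n - (-1) ^ n :=
      mod_cast numDerangements_succ n
    rw [integral_sub_pow_succ_mul_exp_neg_Ioi, ih, hsucc, zero_sub, neg_zero, Real.exp_zero]
    ring
end

section
/- Define sequences of natural numbers by p₀ = 2, p₁ = 6, p_k = (k+1)·(p_{k−1} + p_{k−2}) for k ≥ 2, and q₀ = 1, q₁ = 2, q_k = (k+1)·(q_{k−1} + q_{k−2}) for k ≥ 2. Then the sequence of real numbers p_n / q_n converges to e as n → ∞; that is, the generalized continued fraction 2 + 2/(2 + 3/(3 + 4/(4 + ⋯))) equals e. -/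
/-!
Both `n!` and the number `D n` of derangements of `n` letters satisfy the recurrence
`x (n + 2) = (n + 1) * (x n + x (n + 1))`. Comparing initial values, `p n = (n + 2)!` and
`q n = D (n + 2)`, so `p n / q n` is the reciprocal of the proportion of derangements among the
permutations of `n + 2` letters, and this proportion tends to `exp (-1)`.
-/

section

open Filter
open scoped Nat Topology

theorem eq_of_second_order_recurrence {α : Type*} {f : ℕ → α → α → α} {x y : ℕ → α}
    (hx : ∀ n, x (n + 2) = f n (x n) (x (n + 1)))
    (hy : ∀ n, y (n + 2) = f n (y n) (y (n + 1)))
    (h0 : x 0 = y 0) (h1 : x 1 = y 1) (n : ℕ) : x n = y n := by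
  induction n using Nat.twoStepInduction with
  | zero => exact h0
  | one => exact h1
  | more n ih ih' => rw [hx, hy, ih, ih']

theorem factorial_add_two (n : ℕ) : (n + 2)! = (n + 1) * (n ! + (n + 1)!) := by
  simp only [Nat.factorial_succ]
  ring

theorem tendsto_factorial_div_numDerangements :
    Tendsto (fun n : ℕ => (n ! : ℝ) / numDerangements n) atTop (𝓝 (Real.exp 1)) := by
  simpa only [inv_div, Real.exp_neg, inv_inv] using
    numDerangements_tendsto_inv_e.inv₀ (Real.exp_ne_zero (-1))

end

theorem e_continued_fraction (p q : ℕ → ℕ)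
    (hp0 : p 0 = 2) (hp1 : p 1 = 6)
    (hp : ∀ k, 2 ≤ k → p k = (k + 1) * (p (k - 1) + p (k - 2)))
    (hq0 : q 0 = 1) (hq1 : q 1 = 2)
    (hq : ∀ k, 2 ≤ k → q k = (k + 1) * (q (k - 1) + q (k - 2))) :
    Filter.Tendsto (fun n : ℕ => (p n : ℝ) / (q n : ℝ))
      Filter.atTop (nhds (Real.exp 1)) := by
  have p_eq : ∀ n, p n = (n + 2).factorial :=
    eq_of_second_order_recurrence (f := fun n a b => (n + 3) * (b + a))
      (fun n => hp (n + 2) (Nat.le_add_left 2 n))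
      (fun n => by rw [factorial_add_two, add_comm (Nat.factorial _)]) hp0 hp1
  have q_eq : ∀ n, q n = numDerangements (n + 2) :=
    eq_of_second_order_recurrence (f := fun n a b => (n + 3) * (b + a))
      (fun n => hq (n + 2) (Nat.le_add_left 2 n))
      (fun n => by rw [numDerangements_add_two, add_comm (numDerangements _)]) hq0 hq1
  simpa only [p_eq, q_eq] using
    (Filter.tendsto_add_atTop_iff_nat 2).2 tendsto_factorial_div_numDerangements
end

section
/- Define sequences of natural numbers by p₀ = 0, p₁ = 1, p_k = k·(p_{k−1} + p_{k−2}) for k ≥ 2, and q₀ = 1, q₁ = 1, q_k = k·(q_{k−1} + q_{k−2}) for k ≥ 2. Then for all n, p_n = !(n+1) and q_n = (n+1)! − !(n+1), and the sequence of real numbers p_n / q_n converges to 1/(e − 1); that is, the generalized continued fraction 1/(1 + 2/(2 + 3/(3 + ⋯))) equals 1/(e − 1). -/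
/-!
Both `!(n + 1)` and `(n + 1)!` satisfy the recurrence `u k = k * (u (k - 1) + u (k - 2))` of the
continuants, so comparing initial values identifies `p n` with `!(n + 1)` and `q n + !(n + 1)` with
`(n + 1)!`. The convergents are therefore `x / (1 - x)` with `x = !(n + 1) / (n + 1)!`, and the
limit `x → e⁻¹` yields `e⁻¹ / (1 - e⁻¹) = 1 / (e - 1)`.
-/

open Filter Topology

section Continuants

variable {R : Type*}

/-- The three-term recurrence `u k = b k * u (k - 1) + a k * u (k - 2)`, `k ≥ 2`, obeyed by the
numerators and by the denominators of the convergents of the generalized continued fraction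
`b₀ + a₁ / (b₁ + a₂ / (b₂ + ⋯))`. The index is shifted by two to avoid truncated subtraction. -/
def IsContinuant [Add R] [Mul R] (a b u : ℕ → R) : Prop :=
  ∀ n, u (n + 2) = b (n + 2) * u (n + 1) + a (n + 2) * u n

theorem IsContinuant.ext [Add R] [Mul R] {a b u v : ℕ → R} (hu : IsContinuant a b u)
    (hv : IsContinuant a b v) (h₀ : u 0 = v 0) (h₁ : u 1 = v 1) : u = v := by
  funext n
  induction n using Nat.twoStepInduction with
  | zero => exact h₀
  | one => exact h₁
  | more n ih₀ ih₁ => rw [hu n, hv n, ih₀, ih₁]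

theorem IsContinuant.add [NonUnitalNonAssocSemiring R] {a b u v : ℕ → R}
    (hu : IsContinuant a b u) (hv : IsContinuant a b v) : IsContinuant a b (u + v) := fun n ↦ by
  simp only [Pi.add_apply, hu n, hv n, mul_add, add_add_add_comm]

theorem isContinuant_self_iff [Add R] [Mul R] [LeftDistribClass R] {a u : ℕ → R} :
    IsContinuant a a u ↔ ∀ k, 2 ≤ k → u k = a k * (u (k - 1) + u (k - 2)) := by
  simp only [IsContinuant, ← mul_add]
  refine ⟨fun h k hk ↦ ?_, fun h n ↦ h (n + 2) (Nat.le_add_left 2 n)⟩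
  obtain ⟨n, rfl⟩ := Nat.exists_eq_add_of_le' hk
  exact h n

end Continuants

theorem isContinuant_numDerangements_succ :
    IsContinuant id id fun n ↦ numDerangements (n + 1) := fun n ↦ by
  simp only [id, numDerangements_add_two (n + 1)]
  ring

theorem isContinuant_factorial_succ :
    IsContinuant id id fun n ↦ (n + 1).factorial := fun n ↦ by
  simp only [id, Nat.factorial_succ]
  ring

theorem IsContinuant.eq_numDerangements_succ {p : ℕ → ℕ} (hp : IsContinuant id id p)
    (hp₀ : p 0 = 0) (hp₁ : p 1 = 1) (n : ℕ) : p n = numDerangements (n + 1) :=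
  congrFun (hp.ext isContinuant_numDerangements_succ hp₀ hp₁) n

theorem IsContinuant.add_numDerangements_succ {q : ℕ → ℕ} (hq : IsContinuant id id q)
    (hq₀ : q 0 = 1) (hq₁ : q 1 = 1) (n : ℕ) :
    q n + numDerangements (n + 1) = (n + 1).factorial :=
  congrFun ((hq.add isContinuant_numDerangements_succ).ext isContinuant_factorial_succ
    (by simp [hq₀]) (by simp [hq₁, numDerangements_add_two])) n

theorem tendsto_div_sub_of_tendsto_div {α K : Type*} [Field K] [TopologicalSpace K]
    [IsTopologicalDivisionRing K] {l : Filter α} {u v : α → K} {c : K}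
    (hv : ∀ᶠ x in l, v x ≠ 0) (hc : c ≠ 1) (h : Tendsto (fun x ↦ u x / v x) l (𝓝 c)) :
    Tendsto (fun x ↦ u x / (v x - u x)) l (𝓝 (c / (1 - c))) := by
  refine (h.div (h.const_sub 1) (sub_ne_zero.2 hc.symm)).congr' ?_
  filter_upwards [hv] with x hx
  simp only [Pi.div_apply, one_sub_div hx, div_div_div_cancel_right₀ hx]

theorem exp_neg_div_one_sub_exp_neg (x : ℝ) :
    Real.exp (-x) / (1 - Real.exp (-x)) = 1 / (Real.exp x - 1) := by
  rw [← mul_div_mul_left _ _ (Real.exp_ne_zero x), mul_sub, mul_one, ← Real.exp_add,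
    add_neg_cancel, Real.exp_zero]

theorem tendsto_numDerangements_div_factorial_sub :
    Tendsto (fun n : ℕ ↦ (numDerangements n : ℝ) / (n.factorial - numDerangements n)) atTop
      (𝓝 (1 / (Real.exp 1 - 1))) := by
  rw [← exp_neg_div_one_sub_exp_neg]
  refine tendsto_div_sub_of_tendsto_div (.of_forall fun n ↦ ?_) ?_ numDerangements_tendsto_inv_e
  · exact_mod_cast n.factorial_ne_zero
  · exact (Real.exp_lt_one_iff.2 (by norm_num)).ne

theorem one_div_e_sub_one_continued_fraction (p q : ℕ → ℕ)
    (hp0 : p 0 = 0) (hp1 : p 1 = 1)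
    (hp : ∀ k, 2 ≤ k → p k = k * (p (k - 1) + p (k - 2)))
    (hq0 : q 0 = 1) (hq1 : q 1 = 1)
    (hq : ∀ k, 2 ≤ k → q k = k * (q (k - 1) + q (k - 2))) :
    (∀ n : ℕ, p n = numDerangements (n + 1) ∧
        q n = Nat.factorial (n + 1) - numDerangements (n + 1)) ∧
      Filter.Tendsto (fun n : ℕ => (p n : ℝ) / (q n : ℝ))
        Filter.atTop (nhds (1 / (Real.exp 1 - 1))) := by
  have p_eq := (isContinuant_self_iff.2 hp).eq_numDerangements_succ hp0 hp1
  have q_add := (isContinuant_self_iff.2 hq).add_numDerangements_succ hq0 hq1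
  refine ⟨fun n ↦ ⟨p_eq n, Nat.eq_sub_of_add_eq (q_add n)⟩, ?_⟩
  refine (tendsto_numDerangements_div_factorial_sub.comp (tendsto_add_atTop_nat 1)).congr fun n ↦ ?_
  have q_cast : (q n : ℝ) = (n + 1).factorial - numDerangements (n + 1) :=
    eq_sub_of_add_eq (mod_cast q_add n)
  rw [Function.comp_apply, p_eq, q_cast]
end
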